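/- Null closure preserves being call-reduce-closed: for every guided relation Ψ ⊆ G* × D*, if C(Ψ) = Ψ then C(N(Ψ)) = N(Ψ). -/

import Mathlib

/-!
The relation `NullRepl D γ₀ γ` says that `γ` arises from `γ₀` by replacing some of its states by
nulling sequences. The null closure of `Ψ` consists of the pairs `(γ, ρ)` with `NullRepl D γ₀ γ` for
some `(γ₀, ρ) ∈ Ψ` (`mem_GNClo_iff`), so the theorem reduces to a simulation property
(`NullRepl.simulate`): if `NullRepl D γ₀ γ` and `γ →_δ γ'`, then `γ₀ →_δ γ₀'` for some `γ₀'` with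
`NullRepl D γ₀' γ'`.

Since a nulling sequence is never empty, a leading state of `γ` is also the leading state of `γ₀`,
and the state rules transfer verbatim. If the step executes a guiding block `η`, then `η` is a
maximal run of transitions, so its end is not strictly inside any replacement, and it is the image of
a prefix of `γ₀`. That prefix mixes guiding transitions, executed in blocks, with states that null
via the corresponding factors of `η`; running through it yields exactly the label `η`.
-/

/-- Transitions of a recursive transition network over states `S`,
terminal alphabet `A`, and production labels `P`. -/
inductive Tr (S A P : Type) : Type where
  | shift (s : S) (a : A) (t : S)
  | call (s u t : S)
  | reduce (s : S) (p : P)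

variable {S A P : Type}

/-- A transition is a shift transition. -/
def Tr.isShift : Tr S A P → Prop
  | .shift _ _ _ => True
  | _ => False

/-- One-step reachability induced by a single transition on configurations (words over `S`). -/
inductive Step : Tr S A P → List S → List S → Prop where
  | shift (s : S) (a : A) (t : S) (σ : List S) :
      Step (Tr.shift s a t) (s :: σ) (t :: σ)
  | call (s u t : S) (σ : List S) :
      Step (Tr.call s u t) (s :: σ) (u :: t :: σ)
  | reduce (s : S) (p : P) (σ : List S) :
      Step (Tr.reduce s p) (s :: σ) σ

/-- Reachability along a sequence of transitions, all belonging to `D`. -/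
inductive Reach (D : Set (Tr S A P)) : List (Tr S A P) → List S → List S → Prop where
  | nil (σ : List S) : Reach D [] σ σ
  | cons {d : Tr S A P} {δ : List (Tr S A P)} {σ σ' σ'' : List S} :
      d ∈ D → Step d σ σ' → Reach D δ σ' σ'' → Reach D (d :: δ) σ σ''

/-- `η` consists of non-shift transitions (membership in `D` is enforced by `Reach`). -/
def EpsSeq (η : List (Tr S A P)) : Prop := ∀ d ∈ η, ¬ d.isShift

/-- Guided configuration symbols: states or (non-shift) guiding transitions. -/
abbrev GSym (S A P : Type) := S ⊕ Tr S A P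

/-- `η ∈ D_ε*`, with membership in `D` explicit. -/
def EpsTr (D : Set (Tr S A P)) (η : List (Tr S A P)) : Prop :=
  ∀ d ∈ η, d ∈ D ∧ ¬ d.isShift

/-- The guided configuration does not begin with a (guiding) transition. -/
def notGuidedHead : List (GSym S A P) → Prop
  | Sum.inr _ :: _ => False
  | _ => True

/-- One-step reachability on guided configurations: the three transition rules act
when the first letter is a state, and a nonempty prefix block of guiding transitions
is executed en bloc (as a single step labelled by the block), provided what follows
does not begin with a transition. -/
inductive GStep (D : Set (Tr S A P)) :
    List (Tr S A P) → List (GSym S A P) → List (GSym S A P) → Prop where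
  | shift {s : S} {a : A} {t : S} {γ : List (GSym S A P)} : Tr.shift s a t ∈ D →
      GStep D [Tr.shift s a t] (Sum.inl s :: γ) (Sum.inl t :: γ)
  | call {s u t : S} {γ : List (GSym S A P)} : Tr.call s u t ∈ D →
      GStep D [Tr.call s u t] (Sum.inl s :: γ) (Sum.inl u :: Sum.inl t :: γ)
  | reduce {s : S} {p : P} {γ : List (GSym S A P)} : Tr.reduce s p ∈ D →
      GStep D [Tr.reduce s p] (Sum.inl s :: γ) γ
  | block {η : List (Tr S A P)} {γ : List (GSym S A P)} :
      η ≠ [] → EpsTr D η → notGuidedHead γ →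
      GStep D η (η.map Sum.inr ++ γ) γ

/-- `γ →_δ γ'` on guided configurations: a sequence of guided steps whose labels
concatenate to `δ`. -/
inductive GReach (D : Set (Tr S A P)) :
    List (Tr S A P) → List (GSym S A P) → List (GSym S A P) → Prop where
  | nil (γ : List (GSym S A P)) : GReach D [] γ γ
  | step {δ₁ δ₂ : List (Tr S A P)} {γ γ' γ'' : List (GSym S A P)} :
      GStep D δ₁ γ γ' → GReach D δ₂ γ' γ'' → GReach D (δ₁ ++ δ₂) γ γ''

/-- Guided relations: subsets of `G* × D*`. -/
abbrev GRel (S A P : Type) := Set (List (GSym S A P) × List (Tr S A P))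

/-- A guided relation is null-closed if a state `s` nulling via `η ∈ D_ε*`
(ordinary semantics) may be replaced by `η` in first components. -/
def GNullClosed (D : Set (Tr S A P)) (Ψ : GRel S A P) : Prop :=
  ∀ (γ₁ : List (GSym S A P)) (s : S) (γ₂ : List (GSym S A P))
    (η ρ : List (Tr S A P)),
    EpsSeq η → Reach D η [s] [] →
    (γ₁ ++ Sum.inl s :: γ₂, ρ) ∈ Ψ → (γ₁ ++ η.map Sum.inr ++ γ₂, ρ) ∈ Ψ

/-- Null closure of a guided relation: the smallest null-closed relation containing it. -/
def GNClo (D : Set (Tr S A P)) (Ψ : GRel S A P) : GRel S A P :=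
  ⋂₀ {T | Ψ ⊆ T ∧ GNullClosed D T}

/-- Call-reduce closure of a guided relation:
`C(Ψ) = {(γ', rev η · rev δ) : γ →_η γ', η ∈ D_ε*, (γ, rev δ) ∈ Ψ}`. -/
def GCRC (D : Set (Tr S A P)) (Ψ : GRel S A P) : GRel S A P :=
  {p | ∃ (γ : List (GSym S A P)) (η ρ : List (Tr S A P)),
    EpsSeq η ∧ (γ, ρ) ∈ Ψ ∧ GReach D η γ p.1 ∧ p.2 = η.reverse ++ ρ}

/-- Shift of a guided relation by the terminal `a`:
`S_a(Ψ) = {(γ', d · rev δ) : γ →_d γ', d ∈ D_a, (γ, rev δ) ∈ Ψ}`. -/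
def GShiftR (D : Set (Tr S A P)) (a : A) (Ψ : GRel S A P) : GRel S A P :=
  {p | ∃ (γ : List (GSym S A P)) (ρ : List (Tr S A P)) (s t : S),
    Tr.shift s a t ∈ D ∧ (γ, ρ) ∈ Ψ ∧
    GStep D [Tr.shift s a t] γ p.1 ∧ p.2 = Tr.shift s a t :: ρ}

/-- `NullRepl D γ₀ γ`: the word `γ` is obtained from `γ₀` by replacing some occurrences of states
`s` by guiding sequences `η ∈ D_ε*` with `s →_η ε`. -/
inductive NullRepl (D : Set (Tr S A P)) : List (GSym S A P) → List (GSym S A P) → Prop where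
  | nil : NullRepl D [] []
  | keep (x : GSym S A P) {γ₀ γ : List (GSym S A P)} :
      NullRepl D γ₀ γ → NullRepl D (x :: γ₀) (x :: γ)
  | null {s : S} {η : List (Tr S A P)} {γ₀ γ : List (GSym S A P)} :
      EpsSeq η → Reach D η [s] [] → NullRepl D γ₀ γ →
      NullRepl D (Sum.inl s :: γ₀) (η.map Sum.inr ++ γ)

theorem NullRepl.refl (D : Set (Tr S A P)) (γ : List (GSym S A P)) : NullRepl D γ γ := by
  induction γ with
  | nil => exact .nil
  | cons x γ ih => exact .keep x ih

theorem reach_ne_nil {D : Set (Tr S A P)} {s : S} {η : List (Tr S A P)}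
    (h : Reach D η [s] []) : η ≠ [] := by
  rintro rfl
  cases h

/-- A word with a leading state arises only from a word with the same leading state. -/
theorem NullRepl.of_state {D : Set (Tr S A P)} {s : S} {γ₀ γ : List (GSym S A P)}
    (h : NullRepl D γ₀ (Sum.inl s :: γ)) :
    ∃ γ₀', γ₀ = Sum.inl s :: γ₀' ∧ NullRepl D γ₀' γ := by
  generalize hw : Sum.inl s :: γ = w at h
  cases h with
  | nil => cases hw
  | keep x h => cases hw; exact ⟨_, rfl, h⟩
  | @null _ η _ _ _ hr _ =>
    cases η with
    | nil => exact absurd rfl (reach_ne_nil hr)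
    | cons d η => simp at hw

theorem NullRepl.notGuidedHead {D : Set (Tr S A P)} {γ₀ γ : List (GSym S A P)}
    (h : NullRepl D γ₀ γ) (hγ : notGuidedHead γ) : notGuidedHead γ₀ := by
  cases h with
  | nil => trivial
  | keep x _ => cases x <;> exact hγ
  | null _ _ _ => trivial

/-- Further replacement of a state of the right-hand word. -/
theorem NullRepl.replace {D : Set (Tr S A P)} {s : S} {η : List (Tr S A P)}
    (hη : EpsSeq η) (hr : Reach D η [s] []) {γ₂ γ₀ w : List (GSym S A P)} (h : NullRepl D γ₀ w) :
    ∀ γ₁, w = γ₁ ++ Sum.inl s :: γ₂ → NullRepl D γ₀ (γ₁ ++ η.map Sum.inr ++ γ₂) := by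
  induction h with
  | nil => intro γ₁ hw; simp at hw
  | keep x h ih =>
    intro γ₁ hw
    cases γ₁ with
    | nil =>
      obtain ⟨rfl, rfl⟩ := List.cons.inj hw
      exact .null hη hr h
    | cons y γ₁ =>
      obtain ⟨rfl, hw'⟩ := List.cons.inj hw
      exact .keep x (ih γ₁ hw')
  | @null t ζ γ₀ γ hζ hrt h ih =>
    intro γ₁ hw
    rcases List.append_eq_append_iff.mp hw with ⟨as, h1, h2⟩ | ⟨bs, h1, h2⟩
    · subst h1
      simpa only [List.append_assoc] using NullRepl.null hζ hrt (ih as h2)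
    ·
      -- The occurrence of `s` cannot lie inside the block of transitions `ζ`.
      cases bs with
      | nil =>
        rw [List.append_nil] at h1
        subst h1
        have := NullRepl.null hζ hrt (ih [] (by simpa using h2.symm))
        simpa only [List.append_assoc, List.nil_append] using this
      | cons b bs =>
        obtain ⟨rfl, -⟩ := List.cons.inj h2
        have : (Sum.inl s : GSym S A P) ∈ ζ.map Sum.inr := by rw [h1]; simp
        simp at this

theorem NullRepl.mem_of_nullClosed {D : Set (Tr S A P)} {T : GRel S A P} (hT : GNullClosed D T)
    {ρ : List (Tr S A P)} {γ₀ γ : List (GSym S A P)} (h : NullRepl D γ₀ γ) :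
    ∀ γ₁, (γ₁ ++ γ₀, ρ) ∈ T → (γ₁ ++ γ, ρ) ∈ T := by
  induction h with
  | nil => exact fun _ h => h
  | keep x _ ih =>
    intro γ₁ hm
    simpa using ih (γ₁ ++ [x]) (by simpa using hm)
  | @null s η _ _ hη hr _ ih =>
    intro γ₁ hm
    simpa using ih (γ₁ ++ η.map Sum.inr) (hT _ _ _ _ _ hη hr hm)

theorem mem_GNClo_iff {D : Set (Tr S A P)} {Ψ : GRel S A P} {γ : List (GSym S A P)}
    {ρ : List (Tr S A P)} :
    (γ, ρ) ∈ GNClo D Ψ ↔ ∃ γ₀, (γ₀, ρ) ∈ Ψ ∧ NullRepl D γ₀ γ := by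
  constructor
  · intro h
    refine h {p | ∃ γ₀, (γ₀, p.2) ∈ Ψ ∧ NullRepl D γ₀ p.1} ⟨?_, ?_⟩
    · exact fun p hp => ⟨p.1, hp, .refl D _⟩
    · rintro γ₁ s γ₂ η ρ hη hr ⟨γ₀, hm, hR⟩
      exact ⟨γ₀, hm, hR.replace hη hr γ₁ rfl⟩
  · rintro ⟨γ₀, hm, hR⟩ T ⟨hΨT, hT⟩
    exact hR.mem_of_nullClosed hT [] (hΨT hm)

theorem GReach.trans {D : Set (Tr S A P)} {δ₁ δ₂ : List (Tr S A P)}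
    {γ γ' γ'' : List (GSym S A P)} (h₁ : GReach D δ₁ γ γ') (h₂ : GReach D δ₂ γ' γ'') :
    GReach D (δ₁ ++ δ₂) γ γ'' := by
  induction h₁ with
  | nil => exact h₂
  | step hs _ ih =>
    rw [List.append_assoc]
    exact .step hs (ih h₂)

/-- Ordinary reachability lifts to guided configurations, above any continuation `γ`. -/
theorem Reach.lift {D : Set (Tr S A P)} {δ : List (Tr S A P)} {σ σ' : List S}
    (h : Reach D δ σ σ') (γ : List (GSym S A P)) :
    GReach D δ (σ.map Sum.inl ++ γ) (σ'.map Sum.inl ++ γ) := by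
  induction h with
  | nil => exact .nil _
  | cons hd hs _ ih =>
    cases hs with
    | shift => exact .step (.shift hd) ih
    | call => exact .step (.call hd) ih
    | reduce => exact .step (.reduce hd) ih

/-- A guiding transition can be prepended to a run whose end does not begin with a transition: it
is either a block by itself or is merged into the block executed first. -/
theorem GReach.cons_guide {D : Set (Tr S A P)} {d : Tr S A P} (hd : d ∈ D ∧ ¬ d.isShift)
    {η : List (Tr S A P)} {γ γ' : List (GSym S A P)}
    (h : GReach D η γ γ') (hγ' : notGuidedHead γ') :
    GReach D (d :: η) (Sum.inr d :: γ) γ' := by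
  have single {γ : List (GSym S A P)} (hγ : _root_.notGuidedHead γ) :
      GStep D [d] (Sum.inr d :: γ) γ :=
    .block (η := [d]) (by simp) (by simpa [EpsTr] using hd) hγ
  cases h with
  | nil => exact .step (single hγ') (.nil _)
  | @step ζ _ _ _ _ hs ht =>
    cases hs with
    | shift hD => exact .step (single (γ := Sum.inl _ :: _) trivial) (.step (.shift hD) ht)
    | call hD => exact .step (single (γ := Sum.inl _ :: _) trivial) (.step (.call hD) ht)
    | reduce hD => exact .step (single (γ := Sum.inl _ :: _) trivial) (.step (.reduce hD) ht)
    | block hne hζ hγ =>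
      refine .step (δ₁ := d :: ζ) (.block (η := d :: ζ) (by simp) ?_ hγ) ht
      intro e he
      rcases List.mem_cons.mp he with rfl | he
      · exact hd
      · exact hζ e he

/-- If `η` is followed by a word not beginning with a transition, then any block of transitions
that is a prefix of the whole is a prefix of `η`. -/
theorem guide_prefix {γ γ' : List (GSym S A P)} (hγ' : notGuidedHead γ') :
    ∀ {ζ η : List (Tr S A P)}, ζ.map Sum.inr ++ γ = η.map Sum.inr ++ γ' →
      ∃ η', η = ζ ++ η' ∧ γ = η'.map Sum.inr ++ γ'
  | [], η, h => ⟨η, rfl, h⟩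
  | d :: ζ, [], h => by
    simp only [List.map_nil, List.nil_append] at h
    subst h
    exact hγ'.elim
  | d :: ζ, e :: η, h => by
    simp only [List.map_cons, List.cons_append, List.cons.injEq, Sum.inr.injEq] at h
    obtain ⟨rfl, h⟩ := h
    obtain ⟨η', rfl, hrest⟩ := guide_prefix hγ' h
    exact ⟨η', rfl, hrest⟩

/-- Simulation of the execution of a (possibly empty) maximal guiding block. -/
theorem NullRepl.simulate_block {D : Set (Tr S A P)} {γ' : List (GSym S A P)}
    (hγ' : _root_.notGuidedHead γ') {γ₀ w : List (GSym S A P)} (h : NullRepl D γ₀ w) :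
    ∀ η : List (Tr S A P), EpsTr D η → w = η.map Sum.inr ++ γ' →
      ∃ γ₀', GReach D η γ₀ γ₀' ∧ NullRepl D γ₀' γ' := by
  induction h with
  | nil =>
    intro η _ hw
    obtain ⟨h1, rfl⟩ := List.append_eq_nil_iff.mp hw.symm
    obtain rfl := List.map_eq_nil_iff.mp h1
    exact ⟨[], .nil _, .nil⟩
  | @keep x γ₀ γ h ih =>
    intro η hη hw
    cases η with
    | nil =>
      simp only [List.map_nil, List.nil_append] at hw
      subst hw
      exact ⟨_, .nil _, .keep x h⟩
    | cons d η =>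
      obtain ⟨rfl, hw'⟩ := List.cons.inj hw
      obtain ⟨γ₀', hreach, hR⟩ := ih η (fun e he => hη e (List.mem_cons_of_mem _ he)) hw'
      exact ⟨γ₀', hreach.cons_guide (hη d List.mem_cons_self) (hR.notGuidedHead hγ'), hR⟩
  | @null s ζ γ₀ γ hζ hr h ih =>
    intro η hη hw
    obtain ⟨η', rfl, hw'⟩ := guide_prefix hγ' hw
    obtain ⟨γ₀', hreach, hR⟩ :=
      ih η' (fun e he => hη e (List.mem_append_right _ he)) hw'
    exact ⟨γ₀', (hr.lift γ₀).trans hreach, hR⟩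

theorem NullRepl.simulate {D : Set (Tr S A P)} {δ : List (Tr S A P)}
    {γ γ' : List (GSym S A P)} (h : GReach D δ γ γ') :
    ∀ γ₀, NullRepl D γ₀ γ → ∃ γ₀', GReach D δ γ₀ γ₀' ∧ NullRepl D γ₀' γ' := by
  induction h with
  | nil => exact fun γ₀ hR => ⟨γ₀, .nil _, hR⟩
  | step hs _ ih =>
    intro γ₀ hR
    cases hs with
    | shift hD =>
      obtain ⟨γ₁, rfl, hR'⟩ := hR.of_state
      obtain ⟨γ₂, h1, h2⟩ := ih _ (.keep _ hR')
      exact ⟨γ₂, .step (.shift hD) h1, h2⟩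
    | call hD =>
      obtain ⟨γ₁, rfl, hR'⟩ := hR.of_state
      obtain ⟨γ₂, h1, h2⟩ := ih _ (.keep _ (.keep _ hR'))
      exact ⟨γ₂, .step (.call hD) h1, h2⟩
    | reduce hD =>
      obtain ⟨γ₁, rfl, hR'⟩ := hR.of_state
      obtain ⟨γ₂, h1, h2⟩ := ih _ hR'
      exact ⟨γ₂, .step (.reduce hD) h1, h2⟩
    | block _ hη hγ =>
      obtain ⟨γ₁, h1, hR⟩ := hR.simulate_block hγ _ hη rfl
      obtain ⟨γ₂, h2, hR⟩ := ih _ hR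
      exact ⟨γ₂, h1.trans h2, hR⟩

/-- Null closure preserves being call-reduce-closed:
if `C(Ψ) = Ψ` then `C(N(Ψ)) = N(Ψ)`. -/
theorem nullClosure_preserves_callReduceClosed
    (S A P : Type) (D : Set (Tr S A P)) (Ψ : GRel S A P)
    (h : GCRC D Ψ = Ψ) :
    GCRC D (GNClo D Ψ) = GNClo D Ψ := by
  apply Set.Subset.antisymm
  · rintro ⟨γ', ρ'⟩ ⟨γ, η, ρ, hη, hm, hreach, rfl⟩
    obtain ⟨γ₀, hm₀, hR⟩ := mem_GNClo_iff.mp hm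
    obtain ⟨γ₀', hreach₀, hR'⟩ := NullRepl.simulate hreach γ₀ hR
    refine mem_GNClo_iff.mpr ⟨γ₀', ?_, hR'⟩
    rw [← h]
    exact ⟨γ₀, η, ρ, hη, hm₀, hreach₀, rfl⟩
  · rintro ⟨γ, ρ⟩ hm
    exact ⟨γ, [], ρ, by simp [EpsSeq], hm, .nil _, rfl⟩
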